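/- Let C be an abelian category with enough projective objects and let D be an abelian category in which all countable direct limits exist and are exact. Then every cohomological functor (T^•, δ^•) : C → D admits a Mislin completion, and a Mislin completion can be defined via the satellite functor construction T̂^n(M) := colim_{k ∈ ℕ₀} (S^{-k}T^{n+k}(M), S^{-k}δ̲^{n+k}). -/

import Mathlib

open CategoryTheory Category Limits

universe v u v' u'

namespace Mislin

variable (C : Type u) [Category.{v} C] [Abelian C]
variable (D : Type u') [Category.{v'} D] [Abelian D]

/-- A cohomological functor `(T^•, δ^•) : C ⥤ D` (Axioms 2.1–2.2 of the paper):
a family of additive functors together with connecting homomorphisms, natural with respect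
to morphisms of short exact sequences, inducing long exact sequences. -/
structure CohomFunctor where
  T : ℤ → C ⥤ D
  additive : ∀ n, (T n).Additive
  δ : ∀ {X : ShortComplex C}, X.ShortExact → ∀ n : ℤ, (T n).obj X.X₃ ⟶ (T (n + 1)).obj X.X₁
  δ_natural : ∀ {X Y : ShortComplex C} (hX : X.ShortExact) (hY : Y.ShortExact)
    (φ : X ⟶ Y) (n : ℤ),
    (T n).map φ.τ₃ ≫ δ hY n = δ hX n ≫ (T (n + 1)).map φ.τ₁
  zero₁ : ∀ {X : ShortComplex C}, X.ShortExact → ∀ n : ℤ,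
    (T n).map X.f ≫ (T n).map X.g = 0
  zero₂ : ∀ {X : ShortComplex C} (hX : X.ShortExact) (n : ℤ),
    (T n).map X.g ≫ δ hX n = 0
  zero₃ : ∀ {X : ShortComplex C} (hX : X.ShortExact) (n : ℤ),
    δ hX n ≫ (T (n + 1)).map X.f = 0
  exact₁ : ∀ {X : ShortComplex C} (hX : X.ShortExact) (n : ℤ),
    (ShortComplex.mk ((T n).map X.f) ((T n).map X.g) (zero₁ hX n)).Exact
  exact₂ : ∀ {X : ShortComplex C} (hX : X.ShortExact) (n : ℤ),
    (ShortComplex.mk ((T n).map X.g) (δ hX n) (zero₂ hX n)).Exact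
  exact₃ : ∀ {X : ShortComplex C} (hX : X.ShortExact) (n : ℤ),
    (ShortComplex.mk (δ hX n) ((T (n + 1)).map X.f) (zero₃ hX n)).Exact

variable {C D}

/-- A morphism of cohomological functors (Axiom 2.3). -/
structure CohomHom (T U : CohomFunctor C D) where
  app : ∀ n : ℤ, T.T n ⟶ U.T n
  comm : ∀ {X : ShortComplex C} (hX : X.ShortExact) (n : ℤ),
    (app n).app X.X₃ ≫ U.δ hX n = T.δ hX n ≫ (app (n + 1)).app X.X₁

/-- Composition of morphisms of cohomological functors. -/
def CohomHom.comp {T U V : CohomFunctor C D} (f : CohomHom T U) (g : CohomHom U V) :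
    CohomHom T V where
  app n := f.app n ≫ g.app n
  comm hX n := by
    simp only [NatTrans.comp_app, Category.assoc]
    rw [g.comm hX n, ← Category.assoc, f.comm hX n, Category.assoc]

/-- A cohomological functor vanishes on projectives if `T^n(P) = 0` for all projective `P`
and all `n ∈ ℤ`. -/
def VanishesOnProjectives (T : CohomFunctor C D) : Prop :=
  ∀ (n : ℤ) (P : C), Projective P → IsZero ((T.T n).obj P)

/-- `(T̂^•, δ̂^•)` together with `ν : T^• → T̂^•` is a Mislin completion of `(T^•, δ^•)`
(Definition 2.4): it vanishes on projectives and every morphism to a cohomological functor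
vanishing on projectives factors uniquely through `ν`. -/
structure IsMislinCompletion (T That : CohomFunctor C D) (ν : CohomHom T That) : Prop where
  vanishes : VanishesOnProjectives That
  factors : ∀ (U : CohomFunctor C D), VanishesOnProjectives U → ∀ φ : CohomHom T U,
    ∃! ψ : CohomHom That U, ν.comp ψ = φ

/-- The elementary universal property for a colimit (direct limit) of an `ℕ`-indexed
direct system in `D`. -/
structure IsDirectLimit {X : ℕ → D} (f : ∀ k, X k ⟶ X (k + 1)) (L : D)
    (ι : ∀ k, X k ⟶ L) : Prop where
  comm : ∀ k, f k ≫ ι (k + 1) = ι k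
  desc : ∀ (Z : D) (g : ∀ k, X k ⟶ Z), (∀ k, f k ≫ g (k + 1) = g k) →
    ∃! u : L ⟶ Z, ∀ k, ι k ≫ u = g k

/-- An abstract system of left satellite functors `S^{-k}T^n` of a cohomological functor `T`,
in the sense of Cartan–Eilenberg, together with the connecting homomorphisms `ε`, the
factorisation `δ̲` of `δ` through the first left satellite, and its satellites `S^{-k}δ̲`.
Here `S k n` plays the role of `S^{-k}T^n`. -/
structure SatelliteSystem (T : CohomFunctor C D) where
  S : ℕ → ℤ → C ⥤ D
  additive : ∀ k n, (S k n).Additive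
  S_zero : ∀ n, S 0 n = T.T n
  /-- connecting homomorphisms of satellite functors, `ε^{-k-1} : S^{-k-1}T^n(X₃) ⟶ S^{-k}T^n(X₁)`. -/
  ε : ∀ {X : ShortComplex C}, X.ShortExact → ∀ (k : ℕ) (n : ℤ),
    (S (k + 1) n).obj X.X₃ ⟶ (S k n).obj X.X₁
  ε_natural : ∀ {X Y : ShortComplex C} (hX : X.ShortExact) (hY : Y.ShortExact)
    (φ : X ⟶ Y) (k : ℕ) (n : ℤ),
    (S (k + 1) n).map φ.τ₃ ≫ ε hY k n = ε hX k n ≫ (S k n).map φ.τ₁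
  /-- higher left satellite functors vanish on projective objects. -/
  vanish : ∀ (k : ℕ) (n : ℤ) (P : C), Projective P → IsZero ((S (k + 1) n).obj P)
  sz₁ : ∀ {X : ShortComplex C}, X.ShortExact → ∀ (k : ℕ) (n : ℤ),
    (S k n).map X.f ≫ (S k n).map X.g = 0
  sz₂ : ∀ {X : ShortComplex C} (hX : X.ShortExact) (k : ℕ) (n : ℤ),
    (S (k + 1) n).map X.g ≫ ε hX k n = 0
  sz₃ : ∀ {X : ShortComplex C} (hX : X.ShortExact) (k : ℕ) (n : ℤ),
    ε hX k n ≫ (S k n).map X.f = 0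
  sexact₁ : ∀ {X : ShortComplex C} (hX : X.ShortExact) (k : ℕ) (n : ℤ),
    (ShortComplex.mk ((S k n).map X.f) ((S k n).map X.g) (sz₁ hX k n)).Exact
  sexact₂ : ∀ {X : ShortComplex C} (hX : X.ShortExact) (k : ℕ) (n : ℤ),
    (ShortComplex.mk ((S (k + 1) n).map X.g) (ε hX k n) (sz₂ hX k n)).Exact
  sexact₃ : ∀ {X : ShortComplex C} (hX : X.ShortExact) (k : ℕ) (n : ℤ),
    (ShortComplex.mk (ε hX k n) ((S k n).map X.f) (sz₃ hX k n)).Exact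
  /-- the natural transformations `S^{-k}δ̲^n : S^{-k}T^n → S^{-k-1}T^{n+1}`. -/
  Sδbar : ∀ (k : ℕ) (n : ℤ), S k n ⟶ S (k + 1) (n + 1)
  /-- `δ^n` factors as `δ̲^n` followed by `ε^{-1}` (Diagram 3.4 of the paper). -/
  δ_fac : ∀ {X : ShortComplex C} (hX : X.ShortExact) (n : ℤ),
    T.δ hX n =
      eqToHom (congrArg (fun F : C ⥤ D => F.obj X.X₃) (S_zero n).symm) ≫
        (Sδbar 0 n).app X.X₃ ≫ ε hX 0 (n + 1) ≫
          eqToHom (congrArg (fun F : C ⥤ D => F.obj X.X₁) (S_zero (n + 1)))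
  /-- the defining compatibility of `S^{-k-1}δ̲` with `S^{-k}δ̲` over the kernel
  monomorphisms `ε`, for short exact sequences with projective middle term. -/
  Sδbar_proj : ∀ {X : ShortComplex C} (hX : X.ShortExact), Projective X.X₂ →
    ∀ (k : ℕ) (n : ℤ),
    (Sδbar (k + 1) n).app X.X₃ ≫ ε hX (k + 1) (n + 1) =
      ε hX k n ≫ (Sδbar k n).app X.X₁

theorem cast_step (n : ℤ) (k : ℕ) : n + (k : ℤ) + 1 = n + ((k + 1 : ℕ) : ℤ) := by
  push_cast; ring

/-- The `k`-th term `S^{-k}T^{n+k}(M)` of the direct system of the satellite functor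
construction. -/
def SatelliteSystem.obj {T : CohomFunctor C D} (SS : SatelliteSystem T) (n : ℤ) (M : C)
    (k : ℕ) : D :=
  (SS.S k (n + (k : ℤ))).obj M

/-- The transition morphism `S^{-k}δ̲^{n+k} : S^{-k}T^{n+k}(M) ⟶ S^{-k-1}T^{n+k+1}(M)` of the
direct system of the satellite functor construction. -/
def SatelliteSystem.map {T : CohomFunctor C D} (SS : SatelliteSystem T) (n : ℤ) (M : C)
    (k : ℕ) : SS.obj n M k ⟶ SS.obj n M (k + 1) :=
  (SS.Sδbar k (n + (k : ℤ))).app M ≫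
    eqToHom (congrArg (fun m : ℤ => (SS.S (k + 1) m).obj M) (cast_step n k))

theorem obj_zero_eq {T : CohomFunctor C D} (SS : SatelliteSystem T) (n : ℤ) (M : C) :
    (T.T n).obj M = SS.obj n M 0 := by
  show (T.T n).obj M = (SS.S 0 (n + ((0 : ℕ) : ℤ))).obj M
  rw [SS.S_zero]
  norm_num


/-! ### Left satellites of half exact functors -/

section Satellites

variable {C : Type u} [Category.{v} C] [Abelian C]
variable {D : Type u'} [Category.{v'} D] [Abelian D]

/-- Two lifts of the same morphism differ by a homotopy. -/
lemma lift_unique {X Y : ShortComplex C} (hY : Y.ShortExact) (φ ψ : X ⟶ Y)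
    (h : φ.τ₃ = ψ.τ₃) : ∃ s : X.X₂ ⟶ Y.X₁, φ.τ₁ = ψ.τ₁ + X.f ≫ s := by
  have := hY.mono_f
  have hz : (φ.τ₂ - ψ.τ₂) ≫ Y.g = 0 := by
    rw [Preadditive.sub_comp, φ.comm₂₃, ψ.comm₂₃, h, sub_self]
  refine ⟨hY.exact.lift _ hz, ?_⟩
  rw [← cancel_mono Y.f]
  simp only [Preadditive.add_comp, assoc, ShortComplex.Exact.lift_f, Preadditive.comp_sub,
    φ.comm₁₂, ψ.comm₁₂]
  abel

lemma ker_eq (F : C ⥤ D) [F.Additive] {X Y : ShortComplex C} (hY : Y.ShortExact)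
    (φ ψ : X ⟶ Y) (h : φ.τ₃ = ψ.τ₃) {A : D} (k : A ⟶ F.obj X.X₁)
    (hk : k ≫ F.map X.f = 0) : k ≫ F.map φ.τ₁ = k ≫ F.map ψ.τ₁ := by
  obtain ⟨s, hs⟩ := lift_unique hY φ ψ h
  rw [hs, F.map_add, F.map_comp, Preadditive.comp_add, reassoc_of% hk, zero_comp, add_zero]

variable [EnoughProjectives C]

/-- The chosen projective presentation. -/
noncomputable abbrev canon (M : C) : ShortComplex C :=
  ShortComplex.mk (kernel.ι (Projective.π M)) (Projective.π M) (kernel.condition _)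

lemma canon_exact (M : C) : (canon M).ShortExact where
  exact := ShortComplex.exact_kernel _
  mono_f := by dsimp; infer_instance
  epi_g := by dsimp; infer_instance

lemma exists_lift' {C : Type u} [Category.{v} C] [Abelian C] {X Y : ShortComplex C} (hX : Projective X.X₂) (hY : Y.ShortExact)
    (f : X.X₃ ⟶ Y.X₃) : ∃ φ : X ⟶ Y, φ.τ₃ = f := by
  have := hY.mono_f
  have := hY.epi_g
  have hz : (X.f ≫ Projective.factorThru (X.g ≫ f) Y.g) ≫ Y.g = 0 := by
    rw [assoc, Projective.factorThru_comp, reassoc_of% X.zero, zero_comp]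
  exact ⟨{  τ₁ := hY.exact.lift _ hz
            τ₂ := Projective.factorThru (X.g ≫ f) Y.g
            τ₃ := f
            comm₁₂ := by simp
            comm₂₃ := by simp }, rfl⟩

lemma exists_lift {M : C} {Y : ShortComplex C} (hY : Y.ShortExact) (f : M ⟶ Y.X₃) :
    ∃ φ : canon M ⟶ Y, φ.τ₃ = f :=
  exists_lift' (X := canon M) (Projective.projective_over M) hY f

/-- A chosen lift. -/
noncomputable def lft {M : C} {Y : ShortComplex C} (hY : Y.ShortExact) (f : M ⟶ Y.X₃) :
    canon M ⟶ Y := (exists_lift hY f).choose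

@[simp] lemma lft_τ₃ {M : C} {Y : ShortComplex C} (hY : Y.ShortExact) (f : M ⟶ Y.X₃) :
    (lft hY f).τ₃ = f := (exists_lift hY f).choose_spec

/-- The object `Ker (F K ⟶ F P)`. -/
noncomputable abbrev satObj (F : C ⥤ D) (M : C) : D := kernel (F.map (canon M).f)

/-- The connecting morphism, relative to a morphism into the quotient. -/
noncomputable def satE (F : C ⥤ D) {X : ShortComplex C} (hX : X.ShortExact) :
    satObj F X.X₃ ⟶ F.obj X.X₁ :=
  kernel.ι (F.map (canon X.X₃).f) ≫ F.map (lft hX (𝟙 _)).τ₁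

lemma satE_zero (F : C ⥤ D) {X : ShortComplex C} (hX : X.ShortExact) :
    satE F hX ≫ F.map X.f = 0 := by
  rw [satE, assoc, ← F.map_comp, (lft hX (𝟙 _)).comm₁₂, F.map_comp]
  exact (kernel.condition_assoc _ _).trans zero_comp

/-- Functoriality of the satellite. -/
noncomputable def satMor (F : C ⥤ D) {M N : C} (f : M ⟶ N) : satObj F M ⟶ satObj F N :=
  kernel.lift _ (kernel.ι (F.map (canon M).f) ≫ F.map (lft (canon_exact N) f).τ₁) (by
    rw [assoc, ← F.map_comp, (lft (canon_exact N) f).comm₁₂, F.map_comp]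
    exact (kernel.condition_assoc _ _).trans zero_comp)

lemma satMor_ι (F : C ⥤ D) [F.Additive] {M N : C} (φ : canon M ⟶ canon N) :
    satMor F φ.τ₃ ≫ kernel.ι (F.map (canon N).f) =
      kernel.ι (F.map (canon M).f) ≫ F.map φ.τ₁ := by
  rw [satMor, kernel.lift_ι]
  exact ker_eq F (canon_exact N) _ _ (lft_τ₃ _ _) _ (kernel.condition _)

lemma satMor_satE (F : C ⥤ D) [F.Additive] {M : C} {X : ShortComplex C} (hX : X.ShortExact)
    (φ : canon M ⟶ X) :
    satMor F φ.τ₃ ≫ satE F hX = kernel.ι (F.map (canon M).f) ≫ F.map φ.τ₁ := by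
  rw [satE, satMor, kernel.lift_ι_assoc, assoc, ← F.map_comp]
  exact ker_eq F hX (lft (canon_exact _) φ.τ₃ ≫ lft hX (𝟙 _)) φ
    (by simp) _ (kernel.condition _)

/-- Half exact additive functors. -/
structure HalfExact (C : Type u) [Category.{v} C] [Abelian C]
    (D : Type u') [Category.{v'} D] [Abelian D] where
  F : C ⥤ D
  additive : F.Additive
  zero : ∀ {X : ShortComplex C}, X.ShortExact → F.map X.f ≫ F.map X.g = 0
  exact : ∀ {X : ShortComplex C} (hX : X.ShortExact),
    (ShortComplex.mk (F.map X.f) (F.map X.g) (zero hX)).Exact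

attribute [instance] HalfExact.additive

/-- The left satellite as a functor. -/
noncomputable def satF (F : C ⥤ D) [F.Additive] : C ⥤ D where
  obj := satObj F
  map f := satMor F f
  map_id M := by
    rw [← cancel_mono (kernel.ι (F.map (canon M).f))]
    simpa using satMor_ι F (𝟙 (canon M))
  map_comp {M N K} f g := by
    rw [← cancel_mono (kernel.ι (F.map (canon K).f))]
    have h := satMor_ι F (lft (canon_exact N) f ≫ lft (canon_exact K) g)
    simp only [ShortComplex.comp_τ₃, lft_τ₃, ShortComplex.comp_τ₁, F.map_comp] at h
    rw [h, assoc]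
    simp [satMor]

/-- The connecting morphism. -/
noncomputable def satε (F : C ⥤ D) [F.Additive] {X : ShortComplex C} (hX : X.ShortExact) :
    (satF F).obj X.X₃ ⟶ F.obj X.X₁ := satE F hX

lemma satε_zero (F : C ⥤ D) [F.Additive] {X : ShortComplex C} (hX : X.ShortExact) :
    satε F hX ≫ F.map X.f = 0 := satE_zero F hX

lemma satε_natural (F : C ⥤ D) [F.Additive] {X Y : ShortComplex C} (hX : X.ShortExact)
    (hY : Y.ShortExact) (φ : X ⟶ Y) :
    (satF F).map φ.τ₃ ≫ satε F hY = satε F hX ≫ F.map φ.τ₁ := by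
  have h := satMor_satE F hY (lft hX (𝟙 _) ≫ φ)
  simp only [ShortComplex.comp_τ₃, lft_τ₃, ShortComplex.comp_τ₁, F.map_comp, id_comp] at h
  exact h.trans (assoc _ _ _).symm

/-- The kernel inclusion. -/
noncomputable def satι (F : C ⥤ D) [F.Additive] (M : C) :
    (satF F).obj M ⟶ F.obj (canon M).X₁ := kernel.ι _

instance (F : C ⥤ D) [F.Additive] (M : C) : Mono (satι F M) :=
  inferInstanceAs (Mono (kernel.ι (F.map (canon M).f)))

lemma satι_zero (F : C ⥤ D) [F.Additive] (M : C) : satι F M ≫ F.map (canon M).f = 0 :=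
  kernel.condition _

lemma satε_canon (F : C ⥤ D) [F.Additive] (M : C) : satε F (canon_exact M) = satι F M := by
  have h := satMor_satE F (canon_exact M) (𝟙 _)
  have h2 := (satF F).map_id M
  simp only [ShortComplex.id_τ₃, ShortComplex.id_τ₁, F.map_id, comp_id] at h
  change (satF F).map (𝟙 M) ≫ satε F (canon_exact M) = _ at h
  rw [h2, id_comp] at h
  exact h

/-- Lifting to the satellite. -/
noncomputable def satLift (F : C ⥤ D) [F.Additive] {A : D} {M : C} (y : A ⟶ F.obj (canon M).X₁)
    (hy : y ≫ F.map (canon M).f = 0) : A ⟶ (satF F).obj M := kernel.lift _ y hy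

lemma satLift_ι (F : C ⥤ D) [F.Additive] {A : D} {M : C} (y : A ⟶ F.obj (canon M).X₁)
    (hy : y ≫ F.map (canon M).f = 0) : satLift F y hy ≫ satι F M = y := kernel.lift_ι _ _ _

lemma satLift_ι_assoc (F : C ⥤ D) [F.Additive] {A : D} {M : C} (y : A ⟶ F.obj (canon M).X₁)
    (hy : y ≫ F.map (canon M).f = 0) {Z : D} (h' : F.obj (canon M).X₁ ⟶ Z) :
    satLift F y hy ≫ satι F M ≫ h' = y ≫ h' := by
  simpa only [assoc] using congrArg (· ≫ h') (satLift_ι F y hy)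

lemma satι_lift (F : C ⥤ D) [F.Additive] {A : D} {M : C} (y : A ⟶ F.obj (canon M).X₁)
    (hy : y ≫ F.map (canon M).f = 0) : ∃ z : A ⟶ (satF F).obj M, z ≫ satι F M = y :=
  ⟨satLift F y hy, satLift_ι F y hy⟩

lemma satF_map_ι (F : C ⥤ D) [F.Additive] {M N : C} (f : M ⟶ N) :
    (satF F).map f ≫ satι F N = satι F M ≫ F.map (lft (canon_exact N) f).τ₁ :=
  kernel.lift_ι _ _ _

lemma satF_map_ι_assoc (F : C ⥤ D) [F.Additive] {M N : C} (f : M ⟶ N) {Z : D}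
    (h' : F.obj (canon N).X₁ ⟶ Z) :
    (satF F).map f ≫ satι F N ≫ h' = satι F M ≫ F.map (lft (canon_exact N) f).τ₁ ≫ h' := by
  simpa only [assoc] using congrArg (· ≫ h') (satF_map_ι F f)

lemma satF_map_ι' (F : C ⥤ D) [F.Additive] {M N : C} (φ : canon M ⟶ canon N) :
    (satF F).map φ.τ₃ ≫ satι F N = satι F M ≫ F.map φ.τ₁ := satMor_ι F φ

instance satF_additive (F : C ⥤ D) [F.Additive] : (satF F).Additive where
  map_add {M N} f g := by
    rw [← cancel_mono (satι F N)]
    have h := satF_map_ι' F (lft (canon_exact N) f + lft (canon_exact N) g)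
    simp only [ShortComplex.add_τ₃, lft_τ₃, ShortComplex.add_τ₁, F.map_add] at h
    rw [h, Preadditive.add_comp, satF_map_ι, satF_map_ι, Preadditive.comp_add]

lemma satε_lift (F : C ⥤ D) [F.Additive] {X : ShortComplex C} (hX : X.ShortExact)
    (φ : canon X.X₃ ⟶ X) (h : φ.τ₃ = 𝟙 _) : satε F hX = satι F X.X₃ ≫ F.map φ.τ₁ := by
  rw [← satε_canon, ← satε_natural F (canon_exact _) hX φ, h]
  simp

lemma satF_vanish (F : C ⥤ D) [F.Additive] (P : C) (hP : Projective P) :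
    IsZero ((satF F).obj P) := by
  -- the presentation of `P` splits
  obtain ⟨ψ, hψ⟩ := exists_lift' (X := ShortComplex.mk (0 : P ⟶ P) (𝟙 P) (by simp)) hP
    (canon_exact P) (𝟙 P)
  obtain ⟨s, hs⟩ := lift_unique (canon_exact P)
    (lft (canon_exact P) (𝟙 P) ) (𝟙 (canon P)) (by simp)
  have hs' : ψ.τ₂ ≫ (canon P).g = 𝟙 P := by
    rw [ψ.comm₂₃, hψ]; simp
  have := (canon_exact P).mono_f
  have hz : (𝟙 _ - (canon P).g ≫ ψ.τ₂) ≫ (canon P).g = 0 := by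
    rw [Preadditive.sub_comp, assoc, hs']; simp
  have hr : (canon P).f ≫ (canon_exact P).exact.lift _ hz = 𝟙 _ := by
    rw [← cancel_mono (canon P).f, assoc, ShortComplex.Exact.lift_f, Preadditive.comp_sub,
      (canon P).zero_assoc]
    simp
  rw [IsZero.iff_id_eq_zero, ← cancel_mono (satι F P), zero_comp, id_comp,
    ← comp_id (satι F P), ← F.map_id, ← hr, F.map_comp, ← assoc, satι_zero, zero_comp]

/-- The rotated sequence `K ⟶ X₁ ⊞ P ⟶ X₂`. -/
noncomputable abbrev rot (X : ShortComplex C) (φ : canon X.X₃ ⟶ X) : ShortComplex C :=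
  ShortComplex.mk (X₁ := (canon X.X₃).X₁) (X₂ := X.X₁ ⊞ (canon X.X₃).X₂) (X₃ := X.X₂)
    (biprod.lift (-φ.τ₁) (canon X.X₃).f) (biprod.desc X.f φ.τ₂) (by
      rw [biprod.lift_desc, Preadditive.neg_comp, φ.comm₁₂]
      simp)

lemma rot_exact {X : ShortComplex C} (hX : X.ShortExact) (φ : canon X.X₃ ⟶ X)
    (h : φ.τ₃ = 𝟙 _) : (rot X φ).ShortExact := by
  have := hX.mono_f
  have := hX.epi_g
  have := (canon_exact X.X₃).mono_f
  have hg : φ.τ₂ ≫ X.g = (canon X.X₃).g := by rw [φ.comm₂₃, h]; simp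
  refine { exact := ?_, mono_f := ⟨fun a b hab => ?_⟩, epi_g := ?_ }
  · rw [ShortComplex.exact_iff_exact_up_to_refinements]
    intro A x hx
    have hx' : (x ≫ biprod.fst) ≫ X.f + (x ≫ biprod.snd) ≫ φ.τ₂ = 0 := by
      have : x ≫ biprod.desc X.f φ.τ₂ = 0 := hx
      rw [biprod.desc_eq] at this
      simpa using this
    have h1 : (x ≫ biprod.snd) ≫ (canon X.X₃).g = 0 := by
      have := congrArg (· ≫ X.g) hx'
      simp only [Preadditive.add_comp, assoc, X.zero, comp_zero, zero_add, zero_comp, hg] at this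
      simpa using this
    have h2 := (canon_exact X.X₃).exact.lift_f _ h1
    refine ⟨A, 𝟙 _, inferInstance, (canon_exact X.X₃).exact.lift _ h1, ?_⟩
    rw [id_comp]
    apply biprod.hom_ext
    · rw [← cancel_mono X.f]
      simp only [assoc, biprod.lift_fst, Preadditive.neg_comp, Preadditive.comp_neg, φ.comm₁₂]
      rw [reassoc_of% h2]
      simp only [assoc] at hx'
      exact eq_neg_of_add_eq_zero_left hx'
    · simp only [assoc, biprod.lift_snd]
      exact h2.symm
  · have := congrArg (· ≫ biprod.snd) hab
    simp only [assoc, biprod.lift_snd] at this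
    exact (cancel_mono _).1 this
  · rw [epi_iff_surjective_up_to_refinements]
    intro A y
    have := (canon_exact X.X₃).epi_g
    obtain ⟨A', π, hπ, p, hp⟩ := surjective_up_to_refinements_of_epi (canon X.X₃).g (y ≫ X.g)
    have hz : (π ≫ y - p ≫ φ.τ₂) ≫ X.g = 0 := by
      rw [Preadditive.sub_comp, assoc, assoc, hp, hg, sub_self]
    refine ⟨A', π, hπ, biprod.lift (hX.exact.lift _ hz) p, ?_⟩
    simp [biprod.lift_desc]

/-- The morphism from the rotated sequence to the projective presentation. -/
noncomputable abbrev rotHom (X : ShortComplex C) (φ : canon X.X₃ ⟶ X) (h : φ.τ₃ = 𝟙 _) :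
    rot X φ ⟶ canon X.X₃ where
  τ₁ := 𝟙 _
  τ₂ := biprod.snd
  τ₃ := X.g
  comm₁₂ := by simp
  comm₂₃ := by
    apply biprod.hom_ext'
    · simp
    · have := φ.comm₂₃
      rw [h] at this
      simpa using this.symm

namespace HalfExact

variable (H : HalfExact C D)

lemma sat_exact₃ {X : ShortComplex C} (hX : X.ShortExact) :
    (ShortComplex.mk (satε H.F hX) (H.F.map X.f) (satε_zero H.F hX)).Exact := by
  rw [ShortComplex.exact_iff_exact_up_to_refinements]
  intro A x hx
  dsimp at x hx
  set φ := lft hX (𝟙 _)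
  have hφ : φ.τ₃ = 𝟙 _ := lft_τ₃ _ _
  obtain ⟨A', π, hπ, y, hy⟩ := (H.exact (rot_exact hX φ hφ)).exact_up_to_refinements
    (x ≫ H.F.map biprod.inl) (by
      dsimp only
      rw [assoc, ← H.F.map_comp]
      simpa using hx)
  dsimp only at y hy
  have hy1 := congrArg (· ≫ H.F.map biprod.fst) hy
  have hy2 := congrArg (· ≫ H.F.map biprod.snd) hy
  simp only [assoc, ← H.F.map_comp, biprod.inl_fst, biprod.inl_snd, biprod.lift_fst,
    biprod.lift_snd, H.F.map_id, comp_id, H.F.map_zero, comp_zero, H.F.map_neg] at hy1 hy2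
  obtain ⟨z, hz⟩ := satι_lift H.F (-y) (by
    rw [Preadditive.neg_comp]
    exact neg_eq_zero.2 hy2.symm)
  refine ⟨A', π, hπ, z, ?_⟩
  dsimp only
  rw [hy1, satε_lift H.F hX φ hφ, reassoc_of% hz]
  simp

lemma sat_zero₂ {X : ShortComplex C} (hX : X.ShortExact) :
    (satF H.F).map X.g ≫ satε H.F hX = 0 := by
  have h := satε_natural H.F (rot_exact hX _ (lft_τ₃ hX (𝟙 _))) (canon_exact X.X₃)
    (rotHom X _ (lft_τ₃ hX (𝟙 _)))
  have h0 := satε_zero H.F (rot_exact hX _ (lft_τ₃ hX (𝟙 _)))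
  dsimp only at h h0
  have h0' := congrArg (· ≫ H.F.map biprod.fst) h0
  simp only [assoc, ← H.F.map_comp, biprod.lift_fst, zero_comp, H.F.map_neg,
    Preadditive.comp_neg, neg_eq_zero] at h0'
  rw [H.F.map_id, comp_id] at h
  rw [satε_lift H.F hX _ (lft_τ₃ hX (𝟙 _)), ← satε_canon, reassoc_of% h]
  exact h0'

lemma sat_exact₂ {X : ShortComplex C} (hX : X.ShortExact) :
    (ShortComplex.mk ((satF H.F).map X.g) (satε H.F hX) (sat_zero₂ H hX)).Exact := by
  rw [ShortComplex.exact_iff_exact_up_to_refinements]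
  intro A x hx
  dsimp at x hx
  set φ := lft hX (𝟙 _)
  have hφ : φ.τ₃ = 𝟙 _ := lft_τ₃ _ _
  have h := satε_natural H.F (rot_exact hX φ hφ) (canon_exact X.X₃) (rotHom X φ hφ)
  rw [H.F.map_id, comp_id, satε_canon] at h
  replace hx : x ≫ satι H.F X.X₃ ≫ H.F.map φ.τ₁ = 0 := by
    rw [← satε_lift H.F hX φ hφ]; exact hx
  obtain ⟨A', π, hπ, y, hy⟩ := (H.sat_exact₃ (rot_exact hX φ hφ)).exact_up_to_refinements
    (x ≫ satι H.F X.X₃) (by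
      dsimp only
      have e : biprod.lift (-φ.τ₁) (canon X.X₃).f =
        -(φ.τ₁ ≫ biprod.inl) + (canon X.X₃).f ≫ biprod.inr := by
        apply biprod.hom_ext <;> simp
      rw [e, H.F.map_add, H.F.map_neg, H.F.map_comp, H.F.map_comp, Preadditive.comp_add,
        Preadditive.comp_neg, assoc]
      rw [← assoc (satι H.F X.X₃), ← assoc x, hx, assoc, ← assoc (satι H.F X.X₃)
        (H.F.map (canon X.X₃).f), satι_zero]
      simp)
  refine ⟨A', π, hπ, y, ?_⟩
  rw [← cancel_mono (satι H.F X.X₃), assoc, hy, assoc]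
  dsimp only at h ⊢
  rw [h]

lemma sat_zero₁ {X : ShortComplex C} :
    (satF H.F).map X.f ≫ (satF H.F).map X.g = 0 := by
  rw [← Functor.map_comp, X.zero, Functor.map_zero]

lemma sat_exact₁ {X : ShortComplex C} (hX : X.ShortExact) :
    (ShortComplex.mk ((satF H.F).map X.f) ((satF H.F).map X.g) (sat_zero₁ H)).Exact := by
  rw [ShortComplex.exact_iff_exact_up_to_refinements]
  intro A x hx
  dsimp at x hx
  set φ := lft hX (𝟙 _)
  have hφ : φ.τ₃ = 𝟙 _ := lft_τ₃ _ _
  have h := satε_natural H.F (rot_exact hX φ hφ) (canon_exact X.X₃) (rotHom X φ hφ)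
  rw [H.F.map_id, comp_id, satε_canon] at h
  obtain ⟨A', π, hπ, y, hy⟩ := (H.sat_exact₂ (rot_exact hX φ hφ)).exact_up_to_refinements
    x (by
      refine (congrArg (x ≫ ·) h.symm).trans ?_
      dsimp only
      rw [reassoc_of% hx, zero_comp])
  dsimp only at y hy
  refine ⟨A', π, hπ, y ≫ (satF H.F).map biprod.fst, ?_⟩
  have e : (biprod.desc X.f φ.τ₂ : X.X₁ ⊞ (canon X.X₃).X₂ ⟶ X.X₂) =
    biprod.fst ≫ X.f + biprod.snd ≫ φ.τ₂ := by
    apply biprod.hom_ext' <;> simp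
  have hv : (satF H.F).map φ.τ₂ = 0 :=
    (satF_vanish H.F _ (Projective.projective_over X.X₃)).eq_of_src _ _
  rw [hy, e, Functor.map_add, Functor.map_comp, Functor.map_comp, hv]
  simp

/-- The satellite as a half exact functor. -/
noncomputable def sat : HalfExact C D where
  F := satF H.F
  additive := inferInstance
  zero _ := sat_zero₁ H
  exact hX := sat_exact₁ H hX

end HalfExact

/-- Satellite of a natural transformation. -/
noncomputable def satNat {F G : C ⥤ D} [F.Additive] [G.Additive] (α : F ⟶ G) :
    satF F ⟶ satF G where
  app M := satLift G (satι F M ≫ α.app _) (by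
    rw [assoc, ← α.naturality, ← assoc, satι_zero, zero_comp])
  naturality M N f := by
    rw [← cancel_mono (satι G N), assoc, satLift_ι, assoc, satF_map_ι, satLift_ι_assoc,
      satF_map_ι_assoc, assoc, α.naturality]

lemma satNat_ι {F G : C ⥤ D} [F.Additive] [G.Additive] (α : F ⟶ G) (M : C) :
    (satNat α).app M ≫ satι G M = satι F M ≫ α.app _ := satLift_ι _ _ _

lemma satNat_ι_assoc {F G : C ⥤ D} [F.Additive] [G.Additive] (α : F ⟶ G) (M : C) {Z : D}
    (h' : G.obj (canon M).X₁ ⟶ Z) :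
    (satNat α).app M ≫ satι G M ≫ h' = satι F M ≫ α.app _ ≫ h' := by
  simpa only [assoc] using congrArg (· ≫ h') (satNat_ι α M)

lemma satNat_ε {F G : C ⥤ D} [F.Additive] [G.Additive] (α : F ⟶ G) {X : ShortComplex C}
    (hX : X.ShortExact) :
    (satNat α).app X.X₃ ≫ satε G hX = satε F hX ≫ α.app X.X₁ := by
  rw [satε_lift G hX _ (lft_τ₃ hX (𝟙 _)), satε_lift F hX _ (lft_τ₃ hX (𝟙 _)),
    satNat_ι_assoc, assoc, α.naturality]

variable (T : CohomFunctor C D)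

/-- The terms of a cohomological functor as half exact functors. -/
def toHalf (n : ℤ) : HalfExact C D where
  F := T.T n
  additive := T.additive n
  zero hX := T.zero₁ hX n
  exact hX := T.exact₁ hX n

/-- Iterated satellites. -/
noncomputable def iterSat : ℕ → ℤ → HalfExact C D
  | 0, n => toHalf T n
  | k + 1, n => (iterSat k n).sat

attribute [instance] CohomFunctor.additive

/-- The first factor of the connecting homomorphism. -/
noncomputable def dbar (n : ℤ) : T.T n ⟶ satF (T.T (n + 1)) where
  app M := satLift _ (T.δ (canon_exact M) n) (T.zero₃ (canon_exact M) n)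
  naturality M N f := by
    have := T.δ_natural (canon_exact M) (canon_exact N) (lft (canon_exact N) f) n
    rw [lft_τ₃] at this
    rw [← cancel_mono (satι _ N), assoc, satLift_ι, assoc, satF_map_ι, satLift_ι_assoc]
    exact this

lemma dbar_ι (n : ℤ) (M : C) : (dbar T n).app M ≫ satι _ M = T.δ (canon_exact M) n :=
  satLift_ι _ _ _

lemma dbar_ι_assoc (n : ℤ) (M : C) {Z : D} (h' : (T.T (n + 1)).obj (canon M).X₁ ⟶ Z) :
    (dbar T n).app M ≫ satι _ M ≫ h' = T.δ (canon_exact M) n ≫ h' := by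
  simpa only [assoc] using congrArg (· ≫ h') (dbar_ι T n M)

lemma dbar_ε (n : ℤ) {X : ShortComplex C} (hX : X.ShortExact) :
    (dbar T n).app X.X₃ ≫ satε _ hX = T.δ hX n := by
  rw [satε_lift _ hX _ (lft_τ₃ hX (𝟙 _)), dbar_ι_assoc]
  have := T.δ_natural (canon_exact _) hX (lft hX (𝟙 _)) n
  rw [lft_τ₃, CategoryTheory.Functor.map_id, id_comp] at this
  exact this.symm

/-- The satellites of `dbar`. -/
noncomputable def iterDbar : ∀ (k : ℕ) (n : ℤ), (iterSat T k n).F ⟶ (iterSat T (k + 1) (n + 1)).F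
  | 0, n => dbar T n
  | k + 1, n => satNat (iterDbar k n)

/-- The standard satellite system. -/
noncomputable def stdSys : SatelliteSystem T where
  S k n := (iterSat T k n).F
  additive k n := inferInstance
  S_zero n := rfl
  ε hX k n := satε (iterSat T k n).F hX
  ε_natural hX hY φ k n := satε_natural _ hX hY φ
  vanish k n P hP := satF_vanish _ P hP
  sz₁ hX k n := (iterSat T k n).zero hX
  sz₂ hX k n := (iterSat T k n).sat_zero₂ hX
  sz₃ hX k n := satε_zero _ hX
  sexact₁ hX k n := (iterSat T k n).exact hX
  sexact₂ hX k n := (iterSat T k n).sat_exact₂ hX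
  sexact₃ hX k n := (iterSat T k n).sat_exact₃ hX
  Sδbar := iterDbar T
  δ_fac hX n := by
    refine (dbar_ε T n hX).symm.trans ?_
    refine Eq.trans ?_ (id_comp _).symm
    exact congrArg ((dbar T n).app _ ≫ ·) (comp_id _).symm
  Sδbar_proj hX _ k n := satNat_ε (iterDbar T k n) hX

end Satellites

set_option linter.unusedSectionVars false

/-! ### Direct limits -/

section DirectLimits

variable {D : Type u'} [Category.{v'} D]

namespace IsDirectLimit

variable [Abelian D] {X : ℕ → D} {f : ∀ k, X k ⟶ X (k + 1)} {L : D} {ι : ∀ k, X k ⟶ L}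

lemma hom_ext (h : IsDirectLimit f L ι) {Z : D} {a b : L ⟶ Z}
    (hab : ∀ k, ι k ≫ a = ι k ≫ b) : a = b :=
  (h.desc Z (fun k => ι k ≫ b) (fun k => by rw [← assoc, h.comm])).unique hab (fun _ => rfl)

/-- The induced morphism. -/
noncomputable def dsc (h : IsDirectLimit f L ι) {Z : D} (g : ∀ k, X k ⟶ Z)
    (hg : ∀ k, f k ≫ g (k + 1) = g k) : L ⟶ Z := (h.desc Z g hg).choose

lemma fac (h : IsDirectLimit f L ι) {Z : D} (g : ∀ k, X k ⟶ Z)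
    (hg : ∀ k, f k ≫ g (k + 1) = g k) (k : ℕ) : ι k ≫ h.dsc g hg = g k :=
  (h.desc Z g hg).choose_spec.1 k

lemma fac_assoc (h : IsDirectLimit f L ι) {Z : D} (g : ∀ k, X k ⟶ Z)
    (hg : ∀ k, f k ≫ g (k + 1) = g k) (k : ℕ) {W : D} (h' : Z ⟶ W) :
    ι k ≫ h.dsc g hg ≫ h' = g k ≫ h' := by
  simpa only [assoc] using congrArg (· ≫ h') (h.fac g hg k)

lemma shift (h : IsDirectLimit f L ι) :
    IsDirectLimit (fun k => f (k + 1)) L (fun k => ι (k + 1)) where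
  comm k := h.comm (k + 1)
  desc Z g hg := by
    have hg' : ∀ k, f k ≫ f (k + 1) ≫ g (k + 1) = f k ≫ g k := fun k => by rw [hg]
    refine ⟨h.dsc (fun k => f k ≫ g k) hg', fun k => ?_, fun u hu => ?_⟩
    · rw [h.fac, hg]
    · apply h.hom_ext
      intro k
      rw [h.fac, ← h.comm, assoc, hu]

end IsDirectLimit

variable [Abelian D] [HasColimitsOfShape ℕ D]

lemma isDirectLimit_colimit {X : ℕ → D} (f : ∀ k, X k ⟶ X (k + 1)) :
    IsDirectLimit f (colimit (Functor.ofSequence f))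
      (fun k => colimit.ι (Functor.ofSequence f) k) where
  comm k := by
    have := colimit.w (Functor.ofSequence f) (homOfLE (Nat.le_add_right k 1))
    rwa [Functor.ofSequence_map_homOfLE_succ] at this
  desc Z g hg := by
    let c : Cocone (Functor.ofSequence f) := ⟨Z, NatTrans.ofSequence (fun k => g k) (fun k => by
      rw [Functor.ofSequence_map_homOfLE_succ]
      exact (hg k).trans (comp_id _).symm)⟩
    refine ⟨colimit.desc _ c, fun k => colimit.ι_desc c k, fun u hu => ?_⟩
    apply colimit.hom_ext
    intro k
    rw [colimit.ι_desc]
    exact hu k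

/-- Direct limits are unique up to isomorphism. -/
noncomputable def IsDirectLimit.iso {X : ℕ → D} {f : ∀ k, X k ⟶ X (k + 1)} {L L' : D}
    {ι : ∀ k, X k ⟶ L} {ι' : ∀ k, X k ⟶ L'} (h : IsDirectLimit f L ι)
    (h' : IsDirectLimit f L' ι') : L ≅ L' where
  hom := h.dsc ι' h'.comm
  inv := h'.dsc ι h.comm
  hom_inv_id := h.hom_ext fun k => by rw [h.fac_assoc, h'.fac, comp_id]
  inv_hom_id := h'.hom_ext fun k => by rw [h'.fac_assoc, h.fac, comp_id]

lemma exact_of_evaluation (S : ShortComplex (ℕ ⥤ D))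
    (h : ∀ k, (S.map ((evaluation ℕ D).obj k)).Exact) : S.Exact := by
  rw [ShortComplex.exact_iff_isZero_homology, Functor.isZero_iff]
  intro k
  exact ((ShortComplex.exact_iff_isZero_homology _).1 (h k)).of_iso
    (S.mapHomologyIso ((evaluation ℕ D).obj k)).symm

lemma sq_aux {P₁ P₂ C₁ C₂ L : D} (a : P₁ ⟶ P₂) (i₁ : P₁ ⟶ C₁) (i₂ : P₂ ⟶ C₂) (m : C₁ ⟶ C₂)
    (d : C₂ ⟶ L) (x : P₂ ⟶ L) (e3 : i₁ ≫ m = a ≫ i₂) (e2 : i₂ ≫ d = x) :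
    a ≫ x = i₁ ≫ m ≫ d := by
  rw [← e2, ← Category.assoc, ← e3, Category.assoc]

variable [PreservesFiniteLimits (colim : (ℕ ⥤ D) ⥤ D)]

lemma exact_directLimit {X₁ X₂ X₃ : ℕ → D} {f₁ : ∀ k, X₁ k ⟶ X₁ (k + 1)}
    {f₂ : ∀ k, X₂ k ⟶ X₂ (k + 1)} {f₃ : ∀ k, X₃ k ⟶ X₃ (k + 1)} {L₁ L₂ L₃ : D}
    {ι₁ : ∀ k, X₁ k ⟶ L₁} {ι₂ : ∀ k, X₂ k ⟶ L₂} {ι₃ : ∀ k, X₃ k ⟶ L₃}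
    (h₁ : IsDirectLimit f₁ L₁ ι₁) (h₂ : IsDirectLimit f₂ L₂ ι₂) (h₃ : IsDirectLimit f₃ L₃ ι₃)
    (a : ∀ k, X₁ k ⟶ X₂ k) (b : ∀ k, X₂ k ⟶ X₃ k)
    (ha : ∀ k, f₁ k ≫ a (k + 1) = a k ≫ f₂ k) (hb : ∀ k, f₂ k ≫ b (k + 1) = b k ≫ f₃ k)
    (hab : ∀ k, a k ≫ b k = 0) (hex : ∀ k, (ShortComplex.mk (a k) (b k) (hab k)).Exact)
    (u : L₁ ⟶ L₂) (w : L₂ ⟶ L₃) (hu : ∀ k, ι₁ k ≫ u = a k ≫ ι₂ k)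
    (hw : ∀ k, ι₂ k ≫ w = b k ≫ ι₃ k) (huw : u ≫ w = 0) :
    (ShortComplex.mk u w huw).Exact := by
  let A : Functor.ofSequence f₁ ⟶ Functor.ofSequence f₂ := NatTrans.ofSequence (fun k => a k)
    (fun k => by
      rw [Functor.ofSequence_map_homOfLE_succ, Functor.ofSequence_map_homOfLE_succ]; exact ha k)
  let B : Functor.ofSequence f₂ ⟶ Functor.ofSequence f₃ := NatTrans.ofSequence (fun k => b k)
    (fun k => by
      rw [Functor.ofSequence_map_homOfLE_succ, Functor.ofSequence_map_homOfLE_succ]; exact hb k)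
  let S : ShortComplex (ℕ ⥤ D) := ShortComplex.mk A B (by ext k; exact hab k)
  have hS : S.Exact := exact_of_evaluation S hex
  have : (colim : (ℕ ⥤ D) ⥤ D).PreservesHomology := inferInstance
  have hS' := hS.map (colim : (ℕ ⥤ D) ⥤ D)
  refine ShortComplex.exact_of_iso (ShortComplex.isoMk
    ((isDirectLimit_colimit f₁).iso h₁) ((isDirectLimit_colimit f₂).iso h₂)
    ((isDirectLimit_colimit f₃).iso h₃) ?_ ?_) hS'
  · apply colimit.hom_ext
    intro k
    have e1 := (isDirectLimit_colimit f₁).fac_assoc ι₁ h₁.comm k u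
    have e2 := (isDirectLimit_colimit f₂).fac ι₂ h₂.comm k
    have e3 : colimit.ι (Functor.ofSequence f₁) k ≫ colim.map A =
      a k ≫ colimit.ι (Functor.ofSequence f₂) k := ι_colimMap A k
    change colimit.ι (Functor.ofSequence f₁) k ≫ _ ≫ u =
      colimit.ι (Functor.ofSequence f₁) k ≫ colim.map A ≫ _
    refine e1.trans ((hu k).trans ?_)
    exact sq_aux (a k) _ _ _ _ _ e3 e2
  · apply colimit.hom_ext
    intro k
    have e1 := (isDirectLimit_colimit f₂).fac_assoc ι₂ h₂.comm k w
    have e2 := (isDirectLimit_colimit f₃).fac ι₃ h₃.comm k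
    have e3 : colimit.ι (Functor.ofSequence f₂) k ≫ colim.map B =
      b k ≫ colimit.ι (Functor.ofSequence f₃) k := ι_colimMap B k
    change colimit.ι (Functor.ofSequence f₂) k ≫ _ ≫ w =
      colimit.ι (Functor.ofSequence f₂) k ≫ colim.map B ≫ _
    refine e1.trans ((hw k).trans ?_)
    exact sq_aux (b k) _ _ _ _ _ e3 e2

end DirectLimits

/-! ### The completion -/

section Completion

variable {C : Type u} [Category.{v} C] [Abelian C]
variable {D : Type u'} [Category.{v'} D] [Abelian D]

/-- A reindexed satellite system, with `B k n` in the role of `S^{-k}T^{n+k}`. -/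
structure Sys (T : CohomFunctor C D) where
  B : ℕ → ℤ → C ⥤ D
  additive : ∀ k n, (B k n).Additive
  s : ∀ k n, B k n ⟶ B (k + 1) n
  e : ∀ {X : ShortComplex C}, X.ShortExact → ∀ (k : ℕ) (n : ℤ),
    (B (k + 1) n).obj X.X₃ ⟶ (B k (n + 1)).obj X.X₁
  e_natural : ∀ {X Y : ShortComplex C} (hX : X.ShortExact) (hY : Y.ShortExact)
    (φ : X ⟶ Y) (k : ℕ) (n : ℤ),
    (B (k + 1) n).map φ.τ₃ ≫ e hY k n = e hX k n ≫ (B k (n + 1)).map φ.τ₁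
  vanish : ∀ (k : ℕ) (n : ℤ) (P : C), Projective P → IsZero ((B (k + 1) n).obj P)
  z₁ : ∀ {X : ShortComplex C}, X.ShortExact → ∀ (k : ℕ) (n : ℤ),
    (B k n).map X.f ≫ (B k n).map X.g = 0
  z₂ : ∀ {X : ShortComplex C} (hX : X.ShortExact) (k : ℕ) (n : ℤ),
    (B (k + 1) n).map X.g ≫ e hX k n = 0
  z₃ : ∀ {X : ShortComplex C} (hX : X.ShortExact) (k : ℕ) (n : ℤ),
    e hX k n ≫ (B k (n + 1)).map X.f = 0
  ex₁ : ∀ {X : ShortComplex C} (hX : X.ShortExact) (k : ℕ) (n : ℤ),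
    (ShortComplex.mk ((B k n).map X.f) ((B k n).map X.g) (z₁ hX k n)).Exact
  ex₂ : ∀ {X : ShortComplex C} (hX : X.ShortExact) (k : ℕ) (n : ℤ),
    (ShortComplex.mk ((B (k + 1) n).map X.g) (e hX k n) (z₂ hX k n)).Exact
  ex₃ : ∀ {X : ShortComplex C} (hX : X.ShortExact) (k : ℕ) (n : ℤ),
    (ShortComplex.mk (e hX k n) ((B k (n + 1)).map X.f) (z₃ hX k n)).Exact
  s_e : ∀ {X : ShortComplex C} (hX : X.ShortExact) (k : ℕ) (n : ℤ),
    (s (k + 1) n).app X.X₃ ≫ e hX (k + 1) n = e hX k n ≫ (s k (n + 1)).app X.X₁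
  z : ∀ n, T.T n ≅ B 0 n
  δ_fac : ∀ {X : ShortComplex C} (hX : X.ShortExact) (n : ℤ),
    T.δ hX n = (z n).hom.app X.X₃ ≫ (s 0 n).app X.X₃ ≫ e hX 0 n ≫ (z (n + 1)).inv.app X.X₁

namespace Sys

variable {T : CohomFunctor C D} (Y : Sys T) [HasColimitsOfShape ℕ D]

/-- The colimit object. -/
noncomputable def hatObj (n : ℤ) (M : C) : D :=
  colimit (Functor.ofSequence (X := fun k => (Y.B k n).obj M) (fun k => (Y.s k n).app M))

/-- The structure morphisms. -/
noncomputable def ι (n : ℤ) (M : C) (k : ℕ) : (Y.B k n).obj M ⟶ Y.hatObj n M :=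
  colimit.ι (Functor.ofSequence (X := fun k => (Y.B k n).obj M) (fun k => (Y.s k n).app M)) k

lemma isDL (n : ℤ) (M : C) :
    IsDirectLimit (X := fun k => (Y.B k n).obj M) (fun k => (Y.s k n).app M) (Y.hatObj n M)
      (Y.ι n M) :=
  isDirectLimit_colimit (X := fun k => (Y.B k n).obj M) _

lemma s_ι (n : ℤ) (M : C) (k : ℕ) : (Y.s k n).app M ≫ Y.ι n M (k + 1) = Y.ι n M k :=
  (Y.isDL n M).comm k

/-- Functoriality. -/
noncomputable def hatMap (n : ℤ) {M N : C} (f : M ⟶ N) : Y.hatObj n M ⟶ Y.hatObj n N :=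
  (Y.isDL n M).dsc (fun k => (Y.B k n).map f ≫ Y.ι n N k) (fun k => by
    rw [← NatTrans.naturality_assoc, s_ι])

lemma ι_hatMap (n : ℤ) {M N : C} (f : M ⟶ N) (k : ℕ) :
    Y.ι n M k ≫ Y.hatMap n f = (Y.B k n).map f ≫ Y.ι n N k := (Y.isDL n M).fac _ _ k

lemma ι_hatMap_assoc (n : ℤ) {M N : C} (f : M ⟶ N) (k : ℕ) {Z : D} (h' : Y.hatObj n N ⟶ Z) :
    Y.ι n M k ≫ Y.hatMap n f ≫ h' = (Y.B k n).map f ≫ Y.ι n N k ≫ h' := by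
  simpa only [assoc] using congrArg (· ≫ h') (Y.ι_hatMap n f k)

/-- The components of the completion. -/
noncomputable abbrev hat (n : ℤ) : C ⥤ D where
  obj := Y.hatObj n
  map f := Y.hatMap n f
  map_id M := (Y.isDL n M).hom_ext fun k => by rw [ι_hatMap]; simp
  map_comp f g := (Y.isDL n _).hom_ext fun k => by
    rw [ι_hatMap, ι_hatMap_assoc, ι_hatMap]; simp

/-- The connecting homomorphism. -/
noncomputable def hatδ {X : ShortComplex C} (hX : X.ShortExact) (n : ℤ) :
    Y.hatObj n X.X₃ ⟶ Y.hatObj (n + 1) X.X₁ :=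
  (Y.isDL n X.X₃).shift.dsc (fun k => Y.e hX k n ≫ Y.ι (n + 1) X.X₁ k) (fun k => by
    rw [← assoc, Y.s_e, assoc, s_ι])

lemma ι_hatδ {X : ShortComplex C} (hX : X.ShortExact) (n : ℤ) (k : ℕ) :
    Y.ι n X.X₃ (k + 1) ≫ Y.hatδ hX n = Y.e hX k n ≫ Y.ι (n + 1) X.X₁ k :=
  (Y.isDL n X.X₃).shift.fac _ _ k

lemma ι_hatδ_assoc {X : ShortComplex C} (hX : X.ShortExact) (n : ℤ) (k : ℕ) {Z : D}
    (h' : Y.hatObj (n + 1) X.X₁ ⟶ Z) :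
    Y.ι n X.X₃ (k + 1) ≫ Y.hatδ hX n ≫ h' = Y.e hX k n ≫ Y.ι (n + 1) X.X₁ k ≫ h' := by
  simpa only [assoc] using congrArg (· ≫ h') (Y.ι_hatδ hX n k)

lemma hat_z₁ {X : ShortComplex C} (hX : X.ShortExact) (n : ℤ) :
    Y.hatMap n X.f ≫ Y.hatMap n X.g = 0 :=
  (Y.isDL n _).hom_ext fun k => by
    rw [ι_hatMap_assoc, ι_hatMap, ← assoc, Y.z₁ hX, zero_comp, comp_zero]

lemma hat_z₂ {X : ShortComplex C} (hX : X.ShortExact) (n : ℤ) :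
    Y.hatMap n X.g ≫ Y.hatδ hX n = 0 :=
  (Y.isDL n _).shift.hom_ext fun k => by
    rw [ι_hatMap_assoc, ι_hatδ, ← assoc, Y.z₂ hX, zero_comp, comp_zero]

lemma hat_z₃ {X : ShortComplex C} (hX : X.ShortExact) (n : ℤ) :
    Y.hatδ hX n ≫ Y.hatMap (n + 1) X.f = 0 :=
  (Y.isDL n _).shift.hom_ext fun k => by
    rw [ι_hatδ_assoc, ι_hatMap, ← assoc, Y.z₃ hX, zero_comp, comp_zero]

variable [PreservesFiniteLimits (colim : (ℕ ⥤ D) ⥤ D)]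

/-- The completion. -/
noncomputable abbrev completion : CohomFunctor C D where
  T := Y.hat
  additive n :=
    { map_add := fun {M N} f g => (Y.isDL n M).hom_ext fun k => by
        have := Y.additive k n
        change Y.ι n M k ≫ Y.hatMap n (f + g) = Y.ι n M k ≫ (Y.hatMap n f + Y.hatMap n g)
        rw [Preadditive.comp_add, ι_hatMap, ι_hatMap, ι_hatMap, Functor.map_add,
          Preadditive.add_comp] }
  δ hX n := Y.hatδ hX n
  δ_natural {X X'} hX hX' φ n := (Y.isDL n _).shift.hom_ext fun k => by
    change Y.ι n X.X₃ (k + 1) ≫ Y.hatMap n φ.τ₃ ≫ Y.hatδ hX' n =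
      Y.ι n X.X₃ (k + 1) ≫ Y.hatδ hX n ≫ Y.hatMap (n + 1) φ.τ₁
    rw [ι_hatMap_assoc, ι_hatδ, ι_hatδ_assoc, ι_hatMap, ← assoc, Y.e_natural hX, assoc]
  zero₁ hX n := Y.hat_z₁ hX n
  zero₂ hX n := Y.hat_z₂ hX n
  zero₃ hX n := Y.hat_z₃ hX n
  exact₁ {X} hX n := exact_directLimit (Y.isDL n X.X₁) (Y.isDL n X.X₂) (Y.isDL n X.X₃)
    (fun k => (Y.B k n).map X.f) (fun k => (Y.B k n).map X.g)
    (fun k => ((Y.s k n).naturality _).symm) (fun k => ((Y.s k n).naturality _).symm)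
    (fun k => Y.z₁ hX k n) (fun k => Y.ex₁ hX k n) _ _
    (fun k => Y.ι_hatMap n _ k) (fun k => Y.ι_hatMap n _ k) (Y.hat_z₁ hX n)
  exact₂ {X} hX n := exact_directLimit (Y.isDL n X.X₂).shift (Y.isDL n X.X₃).shift
    (Y.isDL (n + 1) X.X₁)
    (fun k => (Y.B (k + 1) n).map X.g) (fun k => Y.e hX k n)
    (fun k => ((Y.s (k + 1) n).naturality _).symm) (fun k => Y.s_e hX k n)
    (fun k => Y.z₂ hX k n) (fun k => Y.ex₂ hX k n) _ _
    (fun k => Y.ι_hatMap n _ (k + 1)) (fun k => Y.ι_hatδ hX n k) (Y.hat_z₂ hX n)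
  exact₃ {X} hX n := exact_directLimit (Y.isDL n X.X₃).shift
    (Y.isDL (n + 1) X.X₁) (Y.isDL (n + 1) X.X₂)
    (fun k => Y.e hX k n) (fun k => (Y.B k (n + 1)).map X.f)
    (fun k => Y.s_e hX k n) (fun k => ((Y.s k (n + 1)).naturality _).symm)
    (fun k => Y.z₃ hX k n) (fun k => Y.ex₃ hX k n) _ _
    (fun k => Y.ι_hatδ hX n k) (fun k => Y.ι_hatMap (n + 1) _ k) (Y.hat_z₃ hX n)

/-- The canonical morphism to the completion. -/
noncomputable def ν : CohomHom T Y.completion where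
  app n :=
    { app := fun M => (Y.z n).hom.app M ≫ Y.ι n M 0
      naturality := fun M N f => by
        change _ = _ ≫ Y.hatMap n f
        rw [assoc, ι_hatMap, NatTrans.naturality_assoc] }
  comm {X} hX n := by
    change ((Y.z n).hom.app X.X₃ ≫ Y.ι n X.X₃ 0) ≫ Y.hatδ hX n =
      T.δ hX n ≫ (Y.z (n + 1)).hom.app X.X₁ ≫ Y.ι (n + 1) X.X₁ 0
    rw [Y.δ_fac, ← Y.s_ι n X.X₃ 0]
    simp only [assoc, Iso.inv_hom_id_app_assoc]
    rw [ι_hatδ]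

lemma completion_vanishes : VanishesOnProjectives Y.completion := by
  intro n P hP
  change IsZero (Y.hatObj n P)
  rw [IsZero.iff_id_eq_zero]
  exact (Y.isDL n P).shift.hom_ext fun k => (Y.vanish k n P hP).eq_of_src _ _

end Sys

variable [EnoughProjectives C]

lemma isIso_δ (U : CohomFunctor C D) (hU : VanishesOnProjectives U) (M : C) (n : ℤ) :
    IsIso (U.δ (canon_exact M) n) := by
  have hP := Projective.projective_over M
  have h1 : Mono (U.δ (canon_exact M) n) :=
    (U.exact₂ (canon_exact M) n).mono_g ((hU n _ hP).eq_of_src _ _)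
  have h2 : Epi (U.δ (canon_exact M) n) :=
    (U.exact₃ (canon_exact M) n).epi_f ((hU (n + 1) _ hP).eq_of_tgt _ _)
  exact isIso_of_mono_of_epi _

namespace Sys

variable {T : CohomFunctor C D} (Y : Sys T)
variable {U : CohomFunctor C D} (hU : VanishesOnProjectives U) (φ : CohomHom T U)

/-- The levels of the induced morphism. -/
noncomputable def ψ : ∀ (k : ℕ) (n : ℤ) (M : C), (Y.B k n).obj M ⟶ (U.T n).obj M
  | 0, n, M => (Y.z n).inv.app M ≫ (φ.app n).app M
  | k + 1, n, M =>
    have := isIso_δ U hU M n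
    Y.e (canon_exact M) k n ≫ ψ k (n + 1) _ ≫ inv (U.δ (canon_exact M) n)

lemma ψ_succ (k : ℕ) (n : ℤ) (M : C) :
    Y.ψ hU φ (k + 1) n M ≫ U.δ (canon_exact M) n =
      Y.e (canon_exact M) k n ≫ Y.ψ hU φ k (n + 1) _ := by
  have := isIso_δ U hU M n
  simp [ψ]

lemma ψ_natural (k : ℕ) : ∀ (n : ℤ) {M N : C} (f : M ⟶ N),
    (Y.B k n).map f ≫ Y.ψ hU φ k n N = Y.ψ hU φ k n M ≫ (U.T n).map f := by
  induction k with
  | zero =>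
    intro n M N f
    simp [ψ]
  | succ k ih =>
    intro n M N f
    have := isIso_δ U hU N n
    rw [← cancel_mono (U.δ (canon_exact N) n), assoc, ψ_succ, assoc]
    have h1 := Y.e_natural (canon_exact M) (canon_exact N) (lft (canon_exact N) f) k n
    have h2 := U.δ_natural (canon_exact M) (canon_exact N) (lft (canon_exact N) f) n
    rw [lft_τ₃] at h1 h2
    rw [h2, ← assoc, h1, assoc, ih, ← assoc, ← ψ_succ, assoc]

lemma ψ_e {X : ShortComplex C} (hX : X.ShortExact) (k : ℕ) (n : ℤ) :
    Y.e hX k n ≫ Y.ψ hU φ k (n + 1) X.X₁ = Y.ψ hU φ (k + 1) n X.X₃ ≫ U.δ hX n := by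
  have h1 := Y.e_natural (canon_exact _) hX (lft hX (𝟙 _)) k n
  have h2 := U.δ_natural (canon_exact _) hX (lft hX (𝟙 _)) n
  rw [lft_τ₃, CategoryTheory.Functor.map_id, id_comp] at h1 h2
  rw [h1, h2, assoc, ψ_natural, ← assoc, ← ψ_succ, assoc]

lemma ψ_s (k : ℕ) : ∀ (n : ℤ) (M : C),
    (Y.s k n).app M ≫ Y.ψ hU φ (k + 1) n M = Y.ψ hU φ k n M := by
  induction k with
  | zero =>
    intro n M
    have := isIso_δ U hU M n
    rw [← cancel_mono (U.δ (canon_exact M) n), assoc, ψ_succ]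
    have h := φ.comm (canon_exact M) n
    rw [Y.δ_fac] at h
    simp only [ψ, assoc]
    dsimp only at h
    rw [h]
    simp
  | succ k ih =>
    intro n M
    have := isIso_δ U hU M n
    rw [← cancel_mono (U.δ (canon_exact M) n), assoc, ψ_succ, ψ_succ]
    have := Y.s_e (canon_exact M) k n
    dsimp only at this
    rw [reassoc_of% this, ih]

variable [HasColimitsOfShape ℕ D] [PreservesFiniteLimits (colim : (ℕ ⥤ D) ⥤ D)]

/-- The induced morphism. -/
noncomputable def Ψ : CohomHom Y.completion U where
  app n :=
    { app := fun M => (Y.isDL n M).dsc (Y.ψ hU φ · n M) (fun k => Y.ψ_s hU φ k n M)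
      naturality := fun M N f => (Y.isDL n M).hom_ext fun k => by
        change Y.ι n M k ≫ Y.hatMap n f ≫ _ = _
        rw [ι_hatMap_assoc, IsDirectLimit.fac, IsDirectLimit.fac_assoc, ψ_natural] }
  comm {X} hX n := (Y.isDL n X.X₃).shift.hom_ext fun k => by
    change Y.ι n X.X₃ (k + 1) ≫ _ ≫ _ = Y.ι n X.X₃ (k + 1) ≫ Y.hatδ hX n ≫ _
    rw [ι_hatδ_assoc, IsDirectLimit.fac, IsDirectLimit.fac_assoc, ψ_e]

lemma CohomHom_ext {T U : CohomFunctor C D} {f g : CohomHom T U}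
    (h : ∀ n M, (f.app n).app M = (g.app n).app M) : f = g := by
  cases f; cases g
  congr
  funext n
  ext M
  exact h n M

lemma isMislin : IsMislinCompletion T Y.completion Y.ν where
  vanishes := Y.completion_vanishes
  factors U hU φ := by
    refine ⟨Y.Ψ hU φ, ?_, ?_⟩
    · apply CohomHom_ext
      intro n M
      change ((Y.z n).hom.app M ≫ Y.ι n M 0) ≫ _ = _
      rw [assoc]
      have : Y.ι n M 0 ≫ ((Y.Ψ hU φ).app n).app M = Y.ψ hU φ 0 n M :=
        (Y.isDL n M).fac (Y.ψ hU φ · n M) (fun k => Y.ψ_s hU φ k n M) 0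
      rw [this]
      simp [ψ]
    · intro χ hχ
      have key : ∀ (k : ℕ) (n : ℤ) (M : C),
          Y.ι n M k ≫ (χ.app n).app M = Y.ψ hU φ k n M := by
        intro k
        induction k with
        | zero =>
          intro n M
          rw [← hχ]
          simp [ψ, CohomHom.comp, ν]
        | succ k ih =>
          intro n M
          have := isIso_δ U hU M n
          rw [← cancel_mono (U.δ (canon_exact M) n), assoc, ψ_succ, ← ih]
          refine (congrArg (Y.ι n M (k + 1) ≫ ·) (χ.comm (canon_exact M) n)).trans ?_
          exact (Y.ι_hatδ_assoc (canon_exact M) n k _)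
      apply CohomHom_ext
      intro n M
      refine (Y.isDL n M).hom_ext fun k => ?_
      rw [key]
      exact ((Y.isDL n M).fac (Y.ψ hU φ · n M) (fun k => Y.ψ_s hU φ k n M) k).symm

end Sys

end Completion

/-! ### From satellite systems to reindexed systems -/

section Reindex

variable {C : Type u} [Category.{v} C] [Abelian C]
variable {D : Type u'} [Category.{v'} D] [Abelian D]
variable {T : CohomFunctor C D} (SS : SatelliteSystem T)

namespace SatelliteSystem

/-- Transport along an equality of degrees. -/
def cS (k : ℕ) {m m' : ℤ} (h : m = m') : SS.S k m ⟶ SS.S k m' :=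
  eqToHom (congrArg (SS.S k) h)

lemma cS_app (k : ℕ) {m m' : ℤ} (h : m = m') (M : C) : (SS.cS k h).app M =
    eqToHom (congrArg (fun m : ℤ => (SS.S k m).obj M) h) := by
  subst h; simp [cS]

lemma cS_ε {X : ShortComplex C} (hX : X.ShortExact) (k : ℕ) {m m' : ℤ} (h : m = m') :
    (SS.cS (k + 1) h).app X.X₃ ≫ SS.ε hX k m' = SS.ε hX k m ≫ (SS.cS k h).app X.X₁ := by
  subst h; simp [cS]

lemma cS_ε_assoc {X : ShortComplex C} (hX : X.ShortExact) (k : ℕ) {m m' : ℤ} (h : m = m')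
    {Z : D} (h' : (SS.S k m').obj X.X₁ ⟶ Z) :
    (SS.cS (k + 1) h).app X.X₃ ≫ SS.ε hX k m' ≫ h' =
      SS.ε hX k m ≫ (SS.cS k h).app X.X₁ ≫ h' := by
  simpa only [assoc] using congrArg (· ≫ h') (SS.cS_ε hX k h)

lemma cS_Sδbar (k : ℕ) {m m' : ℤ} (h : m = m') (M : C) :
    (SS.cS k h).app M ≫ (SS.Sδbar k m').app M =
      (SS.Sδbar k m).app M ≫ (SS.cS (k + 1) (congrArg (· + 1) h)).app M := by
  subst h; simp [cS]

lemma cS_Sδbar_assoc (k : ℕ) {m m' : ℤ} (h : m = m') (M : C) {Z : D}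
    (h' : (SS.S (k + 1) (m' + 1)).obj M ⟶ Z) :
    (SS.cS k h).app M ≫ (SS.Sδbar k m').app M ≫ h' =
      (SS.Sδbar k m).app M ≫ (SS.cS (k + 1) (congrArg (· + 1) h)).app M ≫ h' := by
  simpa only [assoc] using congrArg (· ≫ h') (SS.cS_Sδbar k h M)

lemma cS_cS (k : ℕ) {m m' m'' : ℤ} (h : m = m') (h' : m' = m'') (M : C) :
    (SS.cS k h).app M ≫ (SS.cS k h').app M = (SS.cS k (h.trans h')).app M := by
  subst h h'; simp [cS]

lemma cS_cS_assoc (k : ℕ) {m m' m'' : ℤ} (h₁ : m = m') (h₂ : m' = m'') (M : C) {Z : D}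
    (h' : (SS.S k m'').obj M ⟶ Z) :
    (SS.cS k h₁).app M ≫ (SS.cS k h₂).app M ≫ h' = (SS.cS k (h₁.trans h₂)).app M ≫ h' := by
  simpa only [assoc] using congrArg (· ≫ h') (SS.cS_cS k h₁ h₂ M)

lemma cS_rfl (k : ℕ) (m : ℤ) : SS.cS k (rfl : m = m) = 𝟙 _ := rfl

lemma cS_z₂ {X : ShortComplex C} (hX : X.ShortExact) (k : ℕ) {m m' : ℤ} (h : m = m') :
    (SS.S (k + 1) m).map X.g ≫ SS.ε hX k m ≫ (SS.cS k h).app X.X₁ = 0 := by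
  rw [← assoc, SS.sz₂, zero_comp]

lemma cS_z₃ {X : ShortComplex C} (hX : X.ShortExact) (k : ℕ) {m m' : ℤ} (h : m = m') :
    (SS.ε hX k m ≫ (SS.cS k h).app X.X₁) ≫ (SS.S k m').map X.f = 0 := by
  rw [assoc, ← NatTrans.naturality, ← assoc, SS.sz₃, zero_comp]

lemma cS_ex₂ {X : ShortComplex C} (hX : X.ShortExact) (k : ℕ) {m m' : ℤ} (h : m = m') :
    (ShortComplex.mk ((SS.S (k + 1) m).map X.g) (SS.ε hX k m ≫ (SS.cS k h).app X.X₁)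
      (SS.cS_z₂ hX k h)).Exact := by
  subst h
  simpa only [cS_rfl, NatTrans.id_app, comp_id] using SS.sexact₂ hX k m

lemma cS_ex₃ {X : ShortComplex C} (hX : X.ShortExact) (k : ℕ) {m m' : ℤ} (h : m = m') :
    (ShortComplex.mk (SS.ε hX k m ≫ (SS.cS k h).app X.X₁) ((SS.S k m').map X.f)
      (SS.cS_z₃ hX k h)).Exact := by
  subst h
  simpa only [cS_rfl, NatTrans.id_app, comp_id] using SS.sexact₃ hX k m

lemma cast_swap (n : ℤ) (k : ℕ) : n + ((k + 1 : ℕ) : ℤ) = n + 1 + (k : ℤ) := by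
  push_cast; ring

lemma cast_nil (n : ℤ) : n = n + ((0 : ℕ) : ℤ) := by simp

variable [EnoughProjectives C]

lemma Sδbar_ε {X : ShortComplex C} (hX : X.ShortExact) (k : ℕ) (n : ℤ) :
    (SS.Sδbar (k + 1) n).app X.X₃ ≫ SS.ε hX (k + 1) (n + 1) =
      SS.ε hX k n ≫ (SS.Sδbar k n).app X.X₁ := by
  have h1 := SS.ε_natural (canon_exact _) hX (lft hX (𝟙 _)) k n
  have h2 := SS.ε_natural (canon_exact _) hX (lft hX (𝟙 _)) (k + 1) (n + 1)
  have h3 := SS.Sδbar_proj (canon_exact X.X₃) (Projective.projective_over _) k n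
  rw [lft_τ₃, CategoryTheory.Functor.map_id, id_comp] at h1 h2
  dsimp only at h3
  rw [h1, h2, reassoc_of% h3, assoc, NatTrans.naturality]

/-- The reindexed system. -/
noncomputable def toSys : Sys T where
  B k n := SS.S k (n + (k : ℤ))
  additive k n := SS.additive _ _
  s k n := SS.Sδbar k (n + (k : ℤ)) ≫ SS.cS (k + 1) (cast_step n k)
  e {X} hX k n := SS.ε hX k (n + ((k + 1 : ℕ) : ℤ)) ≫ (SS.cS k (cast_swap n k)).app X.X₁
  e_natural hX hY φ k n := by
    rw [← assoc, SS.ε_natural hX, assoc, assoc, NatTrans.naturality]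
  vanish k n P hP := SS.vanish _ _ P hP
  z₁ hX k n := SS.sz₁ hX _ _
  z₂ hX k n := SS.cS_z₂ hX _ _
  z₃ hX k n := SS.cS_z₃ hX _ _
  ex₁ hX k n := SS.sexact₁ hX _ _
  ex₂ hX k n := SS.cS_ex₂ hX _ _
  ex₃ hX k n := SS.cS_ex₃ hX _ _
  s_e hX k n := by
    simp only [NatTrans.comp_app, assoc]
    rw [cS_ε_assoc, cS_Sδbar_assoc, cS_cS, cS_cS, ← assoc, Sδbar_ε, assoc]
  z n := eqToIso (SS.S_zero n).symm ≪≫ eqToIso (congrArg (SS.S 0) (cast_nil n))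
  δ_fac {X} hX n := by
    have e1 : (eqToIso (SS.S_zero n).symm ≪≫ eqToIso (congrArg (SS.S 0) (cast_nil n))).hom.app
        X.X₃ = eqToHom (congrArg (fun F : C ⥤ D => F.obj X.X₃) (SS.S_zero n).symm) ≫
          (SS.cS 0 (cast_nil n)).app X.X₃ := by
      simp [cS, eqToHom_app]
    have e2 : (eqToIso (SS.S_zero (n + 1)).symm ≪≫
        eqToIso (congrArg (SS.S 0) (cast_nil (n + 1)))).inv.app
        X.X₁ = (SS.cS 0 (cast_nil (n + 1)).symm).app X.X₁ ≫
          eqToHom (congrArg (fun F : C ⥤ D => F.obj X.X₁) (SS.S_zero (n + 1))) := by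
      simp [cS, eqToHom_app]
    rw [e1, e2, SS.δ_fac]
    simp only [NatTrans.comp_app, assoc]
    rw [cS_Sδbar_assoc, cS_cS_assoc, cS_ε_assoc, cS_cS_assoc, cS_cS_assoc]
    rw [cS_rfl]
    simp

end SatelliteSystem

lemma satellite_part [EnoughProjectives C]
    [HasColimitsOfShape ℕ D] [PreservesFiniteLimits (colim : (ℕ ⥤ D) ⥤ D)] :
      ∃ (That : CohomFunctor C D) (ν : CohomHom T That)
        (ι : ∀ (n : ℤ) (M : C) (k : ℕ), SS.obj n M k ⟶ (That.T n).obj M),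
        IsMislinCompletion T That ν ∧
        (∀ (n : ℤ) (M : C), IsDirectLimit (SS.map n M) ((That.T n).obj M) (ι n M)) ∧
        (∀ (n : ℤ) (M : C), (ν.app n).app M = eqToHom (obj_zero_eq SS n M) ≫ ι n M 0) := by
  refine ⟨SS.toSys.completion, SS.toSys.ν, fun n M k => SS.toSys.ι n M k,
    SS.toSys.isMislin, fun n M => ?_, fun n M => ?_⟩
  · have h := SS.toSys.isDL n M
    have e : (fun k => (SS.toSys.s k n).app M) = SS.map n M := by
      funext k
      change (SS.Sδbar k (n + (k : ℤ)) ≫ SS.cS (k + 1) (cast_step n k)).app M = _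
      rw [NatTrans.comp_app, SatelliteSystem.cS_app]
      rfl
    rw [e] at h
    exact h
  · change (SS.toSys.z n).hom.app M ≫ SS.toSys.ι n M 0 = _
    congr 1
    change (eqToHom (SS.S_zero n).symm ≫
      eqToHom (congrArg (SS.S 0) (SatelliteSystem.cast_nil n))).app M = _
    rw [eqToHom_trans, eqToHom_app]
    rfl

end Reindex

/-- Theorem 3.5. Let `C` be an abelian category with enough projectives and
`D` an abelian category in which all countable direct limits (colimits over the directed set
`ℕ₀`) exist and are exact. Then every cohomological functor `(T^•, δ^•) : C → D` admits a
Mislin completion, and a Mislin completion can be defined via the satellite functor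
construction `T̂^n(M) := colim_{k ∈ ℕ₀} (S^{-k}T^{n+k}(M), S^{-k}δ̲^{n+k})`. -/
theorem mislinCompletion_exists_and_satellite_construction
    {C : Type u} [Category.{v} C] [Abelian C] [EnoughProjectives C]
    {D : Type u'} [Category.{v'} D] [Abelian D]
    [HasColimitsOfShape ℕ D] [PreservesFiniteLimits (colim : (ℕ ⥤ D) ⥤ D)]
    (T : CohomFunctor C D) :
    (∃ (That : CohomFunctor C D) (ν : CohomHom T That), IsMislinCompletion T That ν) ∧
    (∀ SS : SatelliteSystem T,
      ∃ (That : CohomFunctor C D) (ν : CohomHom T That)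
        (ι : ∀ (n : ℤ) (M : C) (k : ℕ), SS.obj n M k ⟶ (That.T n).obj M),
        IsMislinCompletion T That ν ∧
        (∀ (n : ℤ) (M : C), IsDirectLimit (SS.map n M) ((That.T n).obj M) (ι n M)) ∧
        (∀ (n : ℤ) (M : C), (ν.app n).app M = eqToHom (obj_zero_eq SS n M) ≫ ι n M 0)) := by
  exact ⟨by
    obtain ⟨That, ν, -, h, -⟩ := satellite_part (stdSys T)
    exact ⟨That, ν, h⟩, fun SS => satellite_part SS⟩

end Mislin
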